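/- (Propagation of chaos for M3FC, with rate for finite state spaces.) Let 𝒳, 𝒰, 𝒳⁰, 𝒰⁰ be compact metric spaces, with p, p⁰, r Lipschitz, and equi-Lipschitz policy classes Π, Π⁰ with constant L_Π. Consider the N-agent M3FC system: x_0^{i,N} i.i.d. ∼ μ_0, u_t^{i,N} ∼ π_t(·|x_t^{i,N}, x_t^{0,N}, μ_t^N), u_t^{0,N} ∼ π⁰_t(·|x_t^{0,N}, μ_t^N), x_{t+1}^{i,N} ∼ p(·|x_t^{i,N}, u_t^{i,N}, x_t^{0,N}, u_t^{0,N}, μ_t^N), x_{t+1}^{0,N} ∼ p⁰(·|x_t^{0,N}, u_t^{0,N}, μ_t^N), with μ_t^N := (1/N) Σ_i δ_{x_t^{i,N}}; and the limiting M3FC process (x⁰_t, u⁰_t, μ_t) with μ_{t+1} = T(x⁰_t, u⁰_t, μ_t, μ_t ⊗ π_t(x⁰_t, μ_t)), u⁰_t ∼ π⁰_t(·|x⁰_t, μ_t), x⁰_{t+1} ∼ p⁰(·|x⁰_t, u⁰_t, μ_t). Then for any equi-Lipschitz family ℱ ⊆ ℝ^{𝒳⁰ × 𝒰⁰ × 𝒫(𝒳)}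 with shared constant L_ℱ and every t ∈ ℕ: sup_{f ∈ ℱ, π ∈ Π, π⁰ ∈ Π⁰} | E[ f(x_t^{0,N}, u_t^{0,N}, μ_t^N) − f(x⁰_t, u⁰_t, μ_t) ] | → 0 as N → ∞. Moreover, if 𝒳 is finite, the convergence rate is O(1/√N). -/

import Mathlib

open MeasureTheory

noncomputable instance {X : Type*} [MeasurableSpace X] : MeasurableSpace (ProbabilityMeasure X) :=
  inferInstanceAs (MeasurableSpace {μ : Measure X // IsProbabilityMeasure μ})

/-- `W₁` distance on probability measures, via Kantorovich duality. -/
noncomputable def W1 {X : Type*} [MeasurableSpace X] [PseudoMetricSpace X]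
    (μ ν : ProbabilityMeasure X) : ℝ :=
  ⨆ f : {f : X → ℝ // LipschitzWith 1 f},
    |∫ x, (f : X → ℝ) x ∂(μ : Measure X) - ∫ x, (f : X → ℝ) x ∂(ν : Measure X)|

/-- Empirical measure of `N` points (an arbitrary probability measure if `N = 0`). -/
noncomputable def emp {X : Type*} [MeasurableSpace X] [Nonempty X] (N : ℕ) (x : Fin N → X) :
    ProbabilityMeasure X := by
  classical
  exact if hN : N = 0 then ⟨Measure.dirac (Classical.arbitrary X), inferInstance⟩
  else ⟨(N : ENNReal)⁻¹ • ∑ i : Fin N, Measure.dirac (x i), by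
    constructor
    simp only [Measure.smul_apply, Measure.coe_finset_sum, Finset.sum_apply,
      Measure.dirac_apply' _ MeasurableSet.univ, smul_eq_mul]
    simp only [Set.indicator_univ, Pi.one_apply, Finset.sum_const, Finset.card_univ,
      Fintype.card_fin, nsmul_eq_mul, mul_one]
    exact ENNReal.inv_mul_cancel (by exact_mod_cast hN) (by simp)⟩

/-- Law of `(x⁰_t, u⁰_t, (x^{i,N}_t)_i)` in the `N`-agent M3FC system: minor agents start
i.i.d. `μ0`, the major agent starts at `x00`; minor actions are sampled from the shared policy
`π`, the major action from `π0`, and states transition through `p` and `p⁰`, all driven by the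
empirical mean field. -/
noncomputable def m3LawN {X U X0 U0 : Type*} [MeasurableSpace X] [Nonempty X]
    [MeasurableSpace U] [MeasurableSpace X0] [MeasurableSpace U0]
    (p : X → U → X0 → U0 → ProbabilityMeasure X → ProbabilityMeasure X)
    (p0 : X0 → U0 → ProbabilityMeasure X → ProbabilityMeasure X0)
    (π : ℕ → X → X0 → ProbabilityMeasure X → ProbabilityMeasure U)
    (π0 : ℕ → X0 → ProbabilityMeasure X → ProbabilityMeasure U0)
    (μ0 : ProbabilityMeasure X) (x00 : X0) (N : ℕ) :
    ℕ → Measure (X0 × U0 × (Fin N → X))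
  | 0 => (Measure.pi fun _ : Fin N => (μ0 : Measure X)).bind fun x =>
      ((π0 0 x00 (emp N x) : Measure U0)).map fun u0 => (x00, u0, x)
  | t + 1 => (m3LawN p p0 π π0 μ0 x00 N t).bind fun s =>
      (((p0 s.1 s.2.1 (emp N s.2.2) : Measure X0)).prod
        (Measure.pi fun i => ((π t (s.2.2 i) s.1 (emp N s.2.2) : Measure U)).bind
          fun u => (p (s.2.2 i) u s.1 s.2.1 (emp N s.2.2) : Measure X))).bind
        fun y => ((π0 (t + 1) y.1 (emp N y.2) : Measure U0)).map fun u0 => (y.1, u0, y.2)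

/-- Law of `(x⁰_t, u⁰_t, μ_t)` in the limiting M3FC process, where `Tq t x⁰ u⁰ μ` is the
(closed-loop) deterministic mean field transition. -/
noncomputable def m3LimLaw {X U0 X0 : Type*} [MeasurableSpace X]
    [MeasurableSpace X0] [MeasurableSpace U0]
    (p0 : X0 → U0 → ProbabilityMeasure X → ProbabilityMeasure X0)
    (π0 : ℕ → X0 → ProbabilityMeasure X → ProbabilityMeasure U0)
    (Tq : ℕ → X0 → U0 → ProbabilityMeasure X → ProbabilityMeasure X)
    (μ0 : ProbabilityMeasure X) (x00 : X0) :
    ℕ → Measure (X0 × U0 × ProbabilityMeasure X)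
  | 0 => ((π0 0 x00 μ0 : Measure U0)).map fun u0 => (x00, u0, μ0)
  | t + 1 => (m3LimLaw p0 π0 Tq μ0 x00 t).bind fun s =>
      ((p0 s.1 s.2.1 s.2.2 : Measure X0)).bind fun y0 =>
        ((π0 (t + 1) y0 (Tq t s.1 s.2.1 s.2.2) : Measure U0)).map
          fun u0 => (y0, u0, Tq t s.1 s.2.1 s.2.2)


/-! The proof works with test functions. Kantorovich duality makes `𝒫(X)` with `W₁` a pseudometric
space carrying the weak topology, on which the Markov operator of the limiting process maps
Lipschitz functions to Lipschitz functions. Given the current state of the `N`-agent system, the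
next states of the agents are independent, and by linearity of `T` in the mean field the average of
their laws is exactly the next limiting mean field. So one step of the `N`-agent system differs from
the limit operator only by the expected `W₁` distance between an empirical measure and the average
of the underlying laws, and these errors accumulate by induction on time.

The sampling error vanishes uniformly in the laws: by Arzelà–Ascoli, finitely many test functions
determine `W₁` up to `ε`, and each of them costs `O(1/√N)` by the variance bound. On a finite space
the indicators of points determine `W₁` with `ε = 0`, which gives the rate.
-/

open Filter Topology ProbabilityTheory Function
open scoped NNReal ENNReal

section WassersteinDistance

variable {X : Type*} [PseudoMetricSpace X] [CompactSpace X] [MeasurableSpace X]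
  [OpensMeasurableSpace X]

lemma integrable_of_continuous {E : Type*} [TopologicalSpace E] [CompactSpace E] [MeasurableSpace E]
    [OpensMeasurableSpace E] {μ : Measure E} [IsFiniteMeasure μ] {f : E → ℝ} (hf : Continuous f) :
    Integrable f μ :=
  hf.integrable_of_hasCompactSupport (HasCompactSupport.of_compactSpace f)

lemma abs_integral_sub_integral_le {Z : Type*} [MeasurableSpace Z] {μ : Measure Z}
    [IsProbabilityMeasure μ] {f g : Z → ℝ} (hf : Integrable f μ) (hg : Integrable g μ) {c : ℝ}
    (h : ∀ z, |f z - g z| ≤ c) : |∫ z, f z ∂μ - ∫ z, g z ∂μ| ≤ c := by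
  rw [← integral_sub hf hg]
  simpa using norm_integral_le_of_norm_le_const (μ := μ) (f := fun z => f z - g z) (ae_of_all _ h)

lemma bddAbove_range_abs_integral_sub (μ ν : ProbabilityMeasure X) :
    BddAbove (Set.range fun f : {f : X → ℝ // LipschitzWith 1 f} =>
      |∫ x, f.1 x ∂(μ : Measure X) - ∫ x, f.1 x ∂(ν : Measure X)|) := by
  have a : X := Classical.choice μ.nonempty
  refine ⟨2 * Metric.diam (Set.univ : Set X), ?_⟩
  rintro _ ⟨⟨f, hf⟩, rfl⟩
  have near_value (κ : ProbabilityMeasure X) :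
      |∫ x, f x ∂(κ : Measure X) - f a| ≤ Metric.diam (Set.univ : Set X) := by
    have bound (x : X) : |f x - f a| ≤ Metric.diam (Set.univ : Set X) :=
      (hf.dist_le_mul x a).trans <| by
        simpa using Metric.dist_le_diam_of_mem isCompact_univ.isBounded trivial trivial
    simpa using abs_integral_sub_integral_le (μ := (κ : Measure X))
      (integrable_of_continuous hf.continuous) (integrable_const (f a)) bound
  have hμ := abs_le.1 (near_value μ)
  have hν := abs_le.1 (near_value ν)
  exact abs_le.2 ⟨by linarith, by linarith⟩

lemma abs_integral_sub_le_W1 (μ ν : ProbabilityMeasure X) {f : X → ℝ} (hf : LipschitzWith 1 f) :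
    |∫ x, f x ∂(μ : Measure X) - ∫ x, f x ∂(ν : Measure X)| ≤ W1 μ ν :=
  le_ciSup (bddAbove_range_abs_integral_sub μ ν) ⟨f, hf⟩

lemma W1_le {X : Type*} [PseudoMetricSpace X] [MeasurableSpace X] {μ ν : ProbabilityMeasure X}
    {c : ℝ}
    (h : ∀ f : X → ℝ, LipschitzWith 1 f →
      |∫ x, f x ∂(μ : Measure X) - ∫ x, f x ∂(ν : Measure X)| ≤ c) : W1 μ ν ≤ c :=
  have : Nonempty {f : X → ℝ // LipschitzWith 1 f} := ⟨⟨fun _ => 0, LipschitzWith.const' 0⟩⟩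
  ciSup_le fun f => h f.1 f.2

lemma exists_finset_forall_lipschitzWith_one_near {X : Type*} [PseudoMetricSpace X]
    [CompactSpace X] [Nonempty X] {ε : ℝ} (hε : 0 < ε) :
    ∃ s : Finset (X → ℝ), (∀ g ∈ s, LipschitzWith 1 g) ∧
      ∀ f : X → ℝ, LipschitzWith 1 f → ∃ g ∈ s, ∃ c : ℝ, ∀ x, |f x - (g x + c)| ≤ ε := by
  classical
  let a : X := Classical.arbitrary X
  let A : Set (BoundedContinuousFunction X ℝ) := {f | LipschitzWith 1 f ∧ f a = 0}
  have isCompact_closure : IsCompact (closure A) := by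
    refine BoundedContinuousFunction.arzela_ascoli
      (Metric.closedBall 0 (Metric.diam (Set.univ : Set X))) (isCompact_closedBall _ _) A ?_
      (LipschitzWith.uniformEquicontinuous _ 1 fun f : A => f.2.1).equicontinuous
    rintro f x ⟨hf, hfa⟩
    rw [Metric.mem_closedBall, ← hfa]
    refine (hf.dist_le_mul x a).trans ?_
    simpa using Metric.dist_le_diam_of_mem isCompact_univ.isBounded trivial trivial
  obtain ⟨t, htA, ht, hcover⟩ := Metric.finite_approx_of_totallyBounded
    (isCompact_closure.totallyBounded.subset subset_closure) ε hε
  refine ⟨ht.toFinset.image fun g : BoundedContinuousFunction X ℝ => (g : X → ℝ), ?_,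
    fun f hf => ?_⟩
  · simpa using fun g hg => (htA hg).1
  · let F : BoundedContinuousFunction X ℝ :=
      BoundedContinuousFunction.mkOfCompact ⟨fun x => f x - f a, hf.continuous.sub continuous_const⟩
    have hF : F ∈ A :=
      ⟨by simpa [F, lipschitzWith_iff_dist_le_mul] using hf.dist_le_mul, by simp [F]⟩
    obtain ⟨G, hG, hFG⟩ : ∃ G ∈ t, dist F G < ε := by simpa using hcover hF
    refine ⟨G, Finset.mem_image_of_mem _ (ht.mem_toFinset.2 hG), f a, fun x => ?_⟩
    have := (BoundedContinuousFunction.dist_coe_le_dist (f := F) (g := G) x).trans hFG.le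
    simpa [F, Real.dist_eq, sub_sub, add_comm] using this

lemma exists_finset_forall_W1_le [Nonempty X] {ε : ℝ} (hε : 0 < ε) :
    ∃ s : Finset (X → ℝ), (∀ g ∈ s, LipschitzWith 1 g) ∧
      ∀ μ ν : ProbabilityMeasure X, W1 μ ν ≤
        ε + ∑ g ∈ s, |∫ x, g x ∂(μ : Measure X) - ∫ x, g x ∂(ν : Measure X)| := by
  obtain ⟨s, hs, hnear⟩ :=
    exists_finset_forall_lipschitzWith_one_near (X := X) (half_pos hε)
  refine ⟨s, hs, fun μ ν => W1_le fun f hf => ?_⟩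
  obtain ⟨g, hg, c, hc⟩ := hnear f hf
  have integral_near (κ : ProbabilityMeasure X) :
      |∫ x, f x ∂(κ : Measure X) - (∫ x, g x ∂(κ : Measure X) + c)| ≤ ε / 2 := by
    have hgκ := integrable_of_continuous (μ := (κ : Measure X)) (hs g hg).continuous
    simpa [integral_add hgκ (integrable_const c)] using abs_integral_sub_integral_le
      (integrable_of_continuous hf.continuous) (hgκ.add (integrable_const c)) hc
  have hμ := abs_le.1 (integral_near μ)
  have hν := abs_le.1 (integral_near ν)
  have hμν := abs_le.1 (Finset.single_le_sum (f := fun g : X → ℝ =>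
    |∫ x, g x ∂(μ : Measure X) - ∫ x, g x ∂(ν : Measure X)|) (fun _ _ => abs_nonneg _) hg)
  exact abs_le.2 ⟨by linarith, by linarith⟩

lemma W1_self {X : Type*} [PseudoMetricSpace X] [MeasurableSpace X] (μ : ProbabilityMeasure X) :
    W1 μ μ = 0 := by
  simp [W1]

lemma W1_comm {X : Type*} [PseudoMetricSpace X] [MeasurableSpace X] (μ ν : ProbabilityMeasure X) :
    W1 μ ν = W1 ν μ := by
  simp only [W1, abs_sub_comm]

lemma W1_triangle (μ ν ρ : ProbabilityMeasure X) : W1 μ ρ ≤ W1 μ ν + W1 ν ρ :=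
  W1_le fun _ hf => (abs_sub_le _ _ _).trans
    (add_le_add (abs_integral_sub_le_W1 μ ν hf) (abs_integral_sub_le_W1 ν ρ hf))

lemma W1_nonneg {X : Type*} [PseudoMetricSpace X] [MeasurableSpace X]
    (μ ν : ProbabilityMeasure X) : 0 ≤ W1 μ ν :=
  Real.iSup_nonneg fun _ => abs_nonneg _

lemma abs_integral_sub_le_mul_W1 (μ ν : ProbabilityMeasure X) {L : ℝ≥0} {f : X → ℝ}
    (hf : LipschitzWith L f) :
    |∫ x, f x ∂(μ : Measure X) - ∫ x, f x ∂(ν : Measure X)| ≤ L * W1 μ ν := by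
  rcases eq_or_ne L 0 with rfl | hL
  · have a : X := Classical.choice μ.nonempty
    have hconst (x : X) : f x = f a := dist_le_zero.1 (by simpa using hf.dist_le_mul x a)
    simp [hconst]
  · have hscaled : LipschitzWith 1 fun x => (L : ℝ)⁻¹ * f x :=
      LipschitzWith.of_dist_le_mul fun x y => by
        rw [Real.dist_eq, ← mul_sub, abs_mul, abs_of_nonneg (by positivity), ← Real.dist_eq,
          inv_mul_le_iff₀ (by positivity)]
        simpa using hf.dist_le_mul x y
    have := abs_integral_sub_le_W1 μ ν hscaled
    rwa [integral_const_mul, integral_const_mul, ← mul_sub, abs_mul,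
      abs_of_nonneg (by positivity), inv_mul_le_iff₀ (by positivity)] at this

lemma tendsto_W1_nhds (μ : ProbabilityMeasure X) : Tendsto (fun ν => W1 ν μ) (𝓝 μ) (𝓝 0) := by
  have : Nonempty X := μ.nonempty
  refine tendsto_order.2 ⟨fun c hc => Eventually.of_forall fun ν => hc.trans_le (W1_nonneg ν μ),
    fun ε hε => ?_⟩
  obtain ⟨s, hs, hW1⟩ := exists_finset_forall_W1_le (X := X) (half_pos hε)
  have hcont : Continuous fun ν : ProbabilityMeasure X => ε / 2 +
      ∑ g ∈ s, |∫ x, g x ∂(ν : Measure X) - ∫ x, g x ∂(μ : Measure X)| :=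
    continuous_const.add <| continuous_finsetSum s fun g hg =>
      ((ProbabilityMeasure.continuous_integral_continuousMap
        (⟨g, (hs g hg).continuous⟩ : C(X, ℝ))).sub continuous_const).abs
  filter_upwards [(hcont.tendsto μ).eventually_lt_const (u := ε) (by simpa using hε)] with ν hν
  exact (hW1 ν μ).trans_lt hν

lemma comap_W1_nhds_zero (μ : ProbabilityMeasure X) : comap (W1 · μ) (𝓝 0) = 𝓝 μ := by
  refine le_antisymm ?_ (tendsto_W1_nhds μ).le_comap
  refine (tendsto_iff_forall_lipschitz_integral_tendsto (F := comap (W1 · μ) (𝓝 0))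
    (μs := id)).2 ?_
  rintro f - ⟨L, hf⟩
  refine tendsto_iff_dist_tendsto_zero.2 <| squeeze_zero (fun _ => dist_nonneg)
    (fun ν => abs_integral_sub_le_mul_W1 ν μ hf) ?_
  simpa using (tendsto_comap (f := (W1 · μ)) (x := 𝓝 0)).const_mul (L : ℝ)

/-- `W₁` as a pseudometric on `𝒫(X)`; its topology is declared to be the weak topology, with which
it agrees by `comap_W1_nhds_zero`. -/
@[reducible] noncomputable def wassersteinPseudoMetricSpace :
    PseudoMetricSpace (ProbabilityMeasure X) :=
  let m : PseudoMetricSpace (ProbabilityMeasure X) :=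
    { dist := W1
      dist_self := W1_self
      dist_comm := W1_comm
      dist_triangle := W1_triangle }
  m.replaceTopology <| TopologicalSpace.ext_nhds fun μ =>
    (comap_W1_nhds_zero μ).symm.trans (@nhds_comap_dist _ m μ)

end WassersteinDistance

section Wasserstein

attribute [local instance] wassersteinPseudoMetricSpace

section Measurability

lemma measurable_toMeasure_of_continuous {E Y : Type*} [TopologicalSpace E] [MeasurableSpace E]
    [OpensMeasurableSpace E] [PseudoEMetricSpace Y] [MeasurableSpace Y] [BorelSpace Y]
    {κ : E → ProbabilityMeasure Y} (hκ : Continuous κ) : Measurable fun e => (κ e : Measure Y) := by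
  refine Measurable.measure_of_isPiSystem_of_isProbabilityMeasure
    (BorelSpace.measurable_eq.trans borel_eq_generateFrom_isClosed)
    isPiSystem_isClosed fun F (hF : IsClosed F) => ?_
  let δ (n : ℕ) : ℝ := 1 / (n + 1)
  have hδ (n : ℕ) : 0 < δ n := by positivity
  refine measurable_of_tendsto_metrizable (fun n => ?_) <| tendsto_pi_nhds.2 fun e =>
    tendsto_lintegral_thickenedIndicator_of_isClosed (κ e : Measure Y) hF hδ
      tendsto_one_div_add_atTop_nhds_zero_nat
  exact (ProbabilityMeasure.continuous_iff_forall_continuous_lintegral.1 hκ _).measurable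

variable {X : Type*} [MetricSpace X] [CompactSpace X] [MeasurableSpace X] [BorelSpace X]

instance opensMeasurableSpace_probabilityMeasure [Nonempty X] :
    OpensMeasurableSpace (ProbabilityMeasure X) := by
  choose s hs hW1 using fun n : ℕ =>
    exists_finset_forall_W1_le (X := X) (Nat.one_div_pos_of_nat (α := ℝ) (n := n))
  have : Countable (⋃ n, (s n : Set (X → ℝ))) :=
    (Set.countable_iUnion fun n => (s n).countable_toSet).to_subtype
  have lipschitz (g : ⋃ n, (s n : Set (X → ℝ))) : LipschitzWith 1 g.1 := by
    obtain ⟨n, hn⟩ := Set.mem_iUnion.1 g.2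
    exact hs n g.1 hn
  let Φ (μ : ProbabilityMeasure X) (g : ⋃ n, (s n : Set (X → ℝ))) : ℝ :=
    ∫ x, g.1 x ∂(μ : Measure X)
  have continuous_Φ : Continuous Φ := continuous_pi fun g =>
    ProbabilityMeasure.continuous_integral_continuousMap
      (⟨g.1, (lipschitz g).continuous⟩ : C(X, ℝ))
  have injective_Φ : Injective Φ := fun μ ν h => by
    refine (Metric.inseparable_iff.2 (le_antisymm ?_ dist_nonneg)).eq
    refine ge_of_tendsto' tendsto_one_div_add_atTop_nhds_zero_nat fun n => ?_
    have h_integral (g) (hg : g ∈ s n) :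
        ∫ x, g x ∂(μ : Measure X) = ∫ x, g x ∂(ν : Measure X) :=
      congrFun h ⟨g, Set.mem_iUnion.2 ⟨n, hg⟩⟩
    refine (hW1 n μ ν).trans_eq ?_
    rw [Finset.sum_eq_zero fun g hg => by rw [h_integral g hg, sub_self, abs_zero], add_zero]
  have measurable_Φ : Measurable Φ := measurable_pi_lambda _ fun g =>
    ((lipschitz g).continuous.stronglyMeasurable.integral_kernel
      (κ := (⟨_, measurable_subtype_coe⟩ : Kernel (ProbabilityMeasure X) X))).measurable
  refine ⟨MeasurableSpace.generateFrom_le fun U hU => ?_⟩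
  obtain ⟨V, hV, rfl⟩ := (continuous_Φ.isClosedEmbedding injective_Φ).isInducing.isOpen_iff.1 hU
  exact measurable_Φ hV.measurableSet

end Measurability

section BindIntegral

variable {E Z : Type*} [MeasurableSpace E] [MeasurableSpace Z] {κ : E → Measure Z}
  [∀ e, IsProbabilityMeasure (κ e)]

lemma integral_bind_of_continuous [TopologicalSpace Z] [CompactSpace Z] [OpensMeasurableSpace Z]
    {μ : Measure E} [IsProbabilityMeasure μ] (hκ : Measurable κ) {f : Z → ℝ} (hf : Continuous f) :
    ∫ z, f z ∂(μ.bind κ) = ∫ e, ∫ z, f z ∂(κ e) ∂μ := by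
  let k : Kernel E Z := ⟨κ, hκ⟩
  have : IsMarkovKernel k := ⟨inferInstance⟩
  have comp_apply : (k ∘ₖ Kernel.const Unit μ) () = μ.bind κ := by
    rw [Kernel.comp_apply, Kernel.const_apply]; rfl
  rw [← comp_apply]
  exact Kernel.integral_comp (integrable_of_continuous hf)

lemma measurable_bind_of_measurable_uncurry {W : Type*} [MeasurableSpace W]
    {η : E → Z → Measure W} (hκ : Measurable κ) (hη : Measurable (uncurry η)) :
    Measurable fun e => (κ e).bind (η e) := by
  let k : Kernel E Z := ⟨κ, hκ⟩
  have : IsMarkovKernel k := ⟨inferInstance⟩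
  refine Measure.measurable_of_measurable_coe _ fun s hs => ?_
  simp_rw [Measure.bind_apply hs hη.of_uncurry_left.aemeasurable]
  exact Measurable.lintegral_kernel_prod_right (κ := k) (f := fun e z => η e z s)
    ((Measure.measurable_coe hs).comp hη)

lemma measurable_map_of_measurable_uncurry {W : Type*} [MeasurableSpace W] {g : E → Z → W}
    (hκ : Measurable κ) (hg : Measurable (uncurry g)) : Measurable fun e => (κ e).map (g e) := by
  simp_rw [← Measure.bind_dirac_eq_map _ hg.of_uncurry_left]
  exact measurable_bind_of_measurable_uncurry hκ (Measure.measurable_dirac.comp hg)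

end BindIntegral

section LipschitzKernels

variable {E Y Z : Type*} [PseudoMetricSpace E]
  [PseudoMetricSpace Y] [CompactSpace Y] [MeasurableSpace Y] [OpensMeasurableSpace Y]
  [PseudoMetricSpace Z] [CompactSpace Z] [MeasurableSpace Z]

lemma lipschitzWith_integral_kernel {κ : E → ProbabilityMeasure Y} {K L : ℝ≥0}
    (hκ : LipschitzWith K κ) {f : E × Y → ℝ} (hf : LipschitzWith L f) :
    LipschitzWith (L * (1 + K)) fun e => ∫ y, f (e, y) ∂(κ e : Measure Y) := by
  refine LipschitzWith.of_dist_le_mul fun e e' => ?_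
  have lipschitz_right : LipschitzWith L fun y => f (e', y) := by
    simpa [comp_def] using hf.comp (LipschitzWith.prodMk_left e')
  have integrable_right (e : E) (μ : ProbabilityMeasure Y) :
      Integrable (fun y => f (e, y)) (μ : Measure Y) :=
    integrable_of_continuous (hf.continuous.comp (Continuous.prodMk_right e))
  have vary_integrand := abs_integral_sub_integral_le (integrable_right e (κ e))
    (integrable_right e' (κ e)) (c := L * dist e e') fun y => by
      simpa [Prod.dist_eq, Real.dist_eq] using hf.dist_le_mul (e, y) (e', y)
  have vary_measure := (abs_integral_sub_le_mul_W1 (κ e) (κ e') lipschitz_right).trans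
    (mul_le_mul_of_nonneg_left (hκ.dist_le_mul e e') L.coe_nonneg)
  calc dist (∫ y, f (e, y) ∂(κ e : Measure Y)) (∫ y, f (e', y) ∂(κ e' : Measure Y))
    _ ≤ L * dist e e' + L * (K * dist e e') :=
      (dist_triangle _ _ _).trans (add_le_add vary_integrand vary_measure)
    _ = ↑(L * (1 + K)) * dist e e' := by push_cast; ring

variable [BorelSpace Z] {κ : E → ProbabilityMeasure Y} {η : E × Y → ProbabilityMeasure Z}
  {K L : ℝ≥0}

lemma lipschitzWith_bind {ρ : E → ProbabilityMeasure Z} (hκ : LipschitzWith K κ)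
    (hη : LipschitzWith L η)
    (hρ : ∀ e, (ρ e : Measure Z) = (κ e : Measure Y).bind fun y => (η (e, y) : Measure Z)) :
    LipschitzWith (L * (1 + K)) ρ := by
  have integral_ρ {f : Z → ℝ} (hf : Continuous f) (e : E) : ∫ z, f z ∂(ρ e : Measure Z)
      = ∫ y, ∫ z, f z ∂(η (e, y) : Measure Z) ∂(κ e : Measure Y) := by
    rw [hρ]
    exact integral_bind_of_continuous (measurable_toMeasure_of_continuous
      (hη.continuous.comp (Continuous.prodMk_right e))) hf
  refine LipschitzWith.of_dist_le_mul fun e e' => W1_le fun f hf => ?_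
  have integral_η : LipschitzWith L fun z : E × Y => ∫ w, f w ∂(η z : Measure Z) :=
    LipschitzWith.of_dist_le_mul fun z z' =>
      (abs_integral_sub_le_W1 _ _ hf).trans (hη.dist_le_mul z z')
  simpa only [integral_ρ hf.continuous, Real.dist_eq] using
    (lipschitzWith_integral_kernel hκ integral_η).dist_le_mul e e'

lemma exists_lipschitzWith_eq_bind (hκ : LipschitzWith K κ) (hη : LipschitzWith L η) :
    ∃ ρ : E → ProbabilityMeasure Z, LipschitzWith (L * (1 + K)) ρ ∧
      ∀ e, (ρ e : Measure Z) = (κ e : Measure Y).bind fun y => (η (e, y) : Measure Z) := by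
  have measurable_η (e : E) := measurable_toMeasure_of_continuous
    (hη.continuous.comp (Continuous.prodMk_right e))
  let ρ (e : E) : ProbabilityMeasure Z :=
    ⟨(κ e : Measure Y).bind fun y => (η (e, y) : Measure Z),
      isProbabilityMeasure_bind (measurable_η e).aemeasurable (ae_of_all _ fun _ => inferInstance)⟩
  exact ⟨ρ, lipschitzWith_bind hκ hη fun _ => rfl, fun _ => rfl⟩

end LipschitzKernels

section EmpiricalMeasure

variable {X : Type*} [PseudoMetricSpace X] [CompactSpace X] [MeasurableSpace X]
  [OpensMeasurableSpace X]

lemma emp_toMeasure {X : Type*} [MeasurableSpace X] [Nonempty X] {N : ℕ} (hN : N ≠ 0)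
    (x : Fin N → X) : (emp N x : Measure X) = (N : ℝ≥0∞)⁻¹ • ∑ i, Measure.dirac (x i) := by
  simp [emp, hN]

lemma integral_average_measure {N : ℕ} {P : Fin N → ProbabilityMeasure X}
    {ν : ProbabilityMeasure X}
    (hν : (ν : Measure X) = (N : ℝ≥0∞)⁻¹ • ∑ i, (P i : Measure X)) {f : X → ℝ}
    (hf : Continuous f) :
    ∫ x, f x ∂(ν : Measure X) = (N : ℝ)⁻¹ * ∑ i, ∫ x, f x ∂(P i : Measure X) := by
  rw [hν, integral_smul_measure,
    integral_finsetSum_measure fun i _ => integrable_of_continuous hf]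
  simp

lemma integral_emp [Nonempty X] {N : ℕ} (hN : N ≠ 0) (x : Fin N → X) {f : X → ℝ}
    (hf : Continuous f) : ∫ y, f y ∂(emp N x : Measure X) = (N : ℝ)⁻¹ * ∑ i, f (x i) := by
  simpa only [ProbabilityMeasure.coe_mk, integral_dirac' f _ hf.stronglyMeasurable] using
    integral_average_measure (P := fun i => ⟨Measure.dirac (x i), inferInstance⟩)
      (emp_toMeasure hN x) hf

lemma continuous_emp [Nonempty X] (N : ℕ) : Continuous (emp N : (Fin N → X) → _) := by
  rcases eq_or_ne N 0 with rfl | hN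
  · exact continuous_of_const fun x y => by rw [Subsingleton.elim x y]
  · refine ProbabilityMeasure.continuous_iff_forall_continuousMap_continuous_integral.2 fun f => ?_
    simp_rw [integral_emp hN _ f.continuous]
    fun_prop

lemma continuous_prodMk_emp [Nonempty X] {Y : Type*} [TopologicalSpace Y] (N : ℕ) :
    Continuous fun y : Y × (Fin N → X) => (y.1, emp N y.2) :=
  continuous_fst.prodMk ((continuous_emp N).comp continuous_snd)

lemma continuous_prodMk_prodMk_emp [Nonempty X] {Y V : Type*} [TopologicalSpace Y]
    [TopologicalSpace V] (N : ℕ) :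
    Continuous fun s : Y × V × (Fin N → X) => (s.1, s.2.1, emp N s.2.2) :=
  continuous_fst.prodMk ((continuous_prodMk_emp N).comp continuous_snd)

lemma integral_abs_sub_integral_le_sqrt_variance {Ω : Type*} [MeasurableSpace Ω] {μ : Measure Ω}
    [IsProbabilityMeasure μ] {Y : Ω → ℝ} (hY : MemLp Y 2 μ) :
    ∫ ω, |Y ω - ∫ ω', Y ω' ∂μ| ∂μ ≤ √(variance Y μ) := by
  refine Real.le_sqrt_of_sq_le ?_
  have deviation_memLp : MemLp (fun ω => |Y ω - ∫ ω', Y ω' ∂μ|) 2 μ :=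
    (hY.sub (memLp_const _)).abs
  have jensen := variance_nonneg (fun ω => |Y ω - ∫ ω', Y ω' ∂μ|) μ
  rw [variance_eq_sub deviation_memLp] at jensen
  rw [variance_eq_integral hY.aemeasurable]
  simpa using jensen

lemma variance_average_pi_le {N : ℕ} (P : Fin N → ProbabilityMeasure X) {φ : X → ℝ}
    (hφ : Continuous φ) {D : ℝ} (hD : ∀ x y, |φ x - φ y| ≤ D) :
    variance (fun y : Fin N → X => (N : ℝ)⁻¹ * ∑ i, φ (y i))
      (Measure.pi fun i => (P i : Measure X)) ≤ D ^ 2 / N := by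
  have memLp_φ (i : Fin N) : MemLp φ 2 (P i : Measure X) :=
    hφ.memLp_of_hasCompactSupport (HasCompactSupport.of_compactSpace φ)
  have variance_φ (i : Fin N) : variance φ (P i : Measure X) ≤ D ^ 2 := by
    obtain ⟨a⟩ : Nonempty X := (P i).nonempty
    refine (variance_le_sq_of_bounded (a := φ a - D) (b := φ a + D)
      (ae_of_all _ fun x => ?_) hφ.aemeasurable).trans_eq (by ring)
    exact ⟨by linarith [abs_le.1 (hD x a)], by linarith [abs_le.1 (hD x a)]⟩
  have variance_sum : variance (fun y : Fin N → X => ∑ i, φ (y i))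
      (Measure.pi fun i => (P i : Measure X)) = ∑ i, variance φ (P i : Measure X) := by
    rw [← variance_sum_pi memLp_φ]
    congr 1 with y
    simp
  calc
    _ ≤ (N : ℝ)⁻¹ ^ 2 * ∑ _i : Fin N, D ^ 2 := by
      rw [variance_const_mul, variance_sum]
      gcongr with i
      exact variance_φ i
    _ = D ^ 2 / N := by
      rcases eq_or_ne N 0 with rfl | hN
      · simp
      · simp only [Finset.sum_const, Finset.card_univ, Fintype.card_fin, nsmul_eq_mul]
        field_simp

lemma integral_abs_integral_emp_sub_integral_le [Nonempty X] {N : ℕ} (hN : N ≠ 0)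
    {P : Fin N → ProbabilityMeasure X} {ν : ProbabilityMeasure X}
    (hν : (ν : Measure X) = (N : ℝ≥0∞)⁻¹ • ∑ i, (P i : Measure X)) {φ : X → ℝ}
    (hφ : Continuous φ) {D : ℝ} (hD : ∀ x y, |φ x - φ y| ≤ D) :
    ∫ y, |∫ x, φ x ∂(emp N y : Measure X) - ∫ x, φ x ∂(ν : Measure X)|
      ∂(Measure.pi fun i => (P i : Measure X)) ≤ D / √N := by
  have average_continuous : Continuous fun y : Fin N → X => (N : ℝ)⁻¹ * ∑ i, φ (y i) := by
    fun_prop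
  have integral_average : ∫ y, (N : ℝ)⁻¹ * ∑ i, φ (y i) ∂(Measure.pi fun i => (P i : Measure X))
      = ∫ x, φ x ∂(ν : Measure X) := by
    rw [integral_average_measure hν hφ, integral_const_mul,
      integral_finsetSum _ fun i _ => integrable_of_continuous (by fun_prop)]
    simp_rw [integral_comp_eval (μ := fun i => (P i : Measure X)) hφ.aestronglyMeasurable]
  have nonneg_D : 0 ≤ D := by
    obtain ⟨a⟩ := ‹Nonempty X›
    exact (abs_nonneg _).trans (hD a a)
  simp_rw [integral_emp hN _ hφ, ← integral_average]
  calc _ ≤ √(variance (fun y : Fin N → X => (N : ℝ)⁻¹ * ∑ i, φ (y i))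
          (Measure.pi fun i => (P i : Measure X))) :=
        integral_abs_sub_integral_le_sqrt_variance <|
          average_continuous.memLp_of_hasCompactSupport (HasCompactSupport.of_compactSpace _)
    _ ≤ √(D ^ 2 / N) := Real.sqrt_le_sqrt (variance_average_pi_le P hφ hD)
    _ = D / √N := by rw [Real.sqrt_div (sq_nonneg D), Real.sqrt_sq nonneg_D]

/-- `e` bounds the expected `W₁` distance between the empirical measure of `N` independent, not
necessarily identically distributed, points and the average `ν` of their laws, uniformly in those
laws. -/
def IsEmpiricalW1Bound (X : Type*) [PseudoMetricSpace X] [MeasurableSpace X] [Nonempty X] (N : ℕ)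
    (e : ℝ) : Prop :=
  ∀ (P : Fin N → ProbabilityMeasure X) (ν : ProbabilityMeasure X),
    (ν : Measure X) = (N : ℝ≥0∞)⁻¹ • ∑ i, (P i : Measure X) →
    ∫ y, W1 (emp N y) ν ∂(Measure.pi fun i => (P i : Measure X)) ≤ e

lemma isEmpiricalW1Bound_of_W1_le_sum [Nonempty X] {N : ℕ} (hN : N ≠ 0) {ι : Type*} {s : Finset ι}
    {φ : ι → X → ℝ} (hφ : ∀ i ∈ s, Continuous (φ i)) {D : ℝ}
    (hD : ∀ i ∈ s, ∀ x y, |φ i x - φ i y| ≤ D) {ε : ℝ}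
    (hW1 : ∀ μ ν : ProbabilityMeasure X, W1 μ ν ≤
      ε + ∑ i ∈ s, |∫ x, φ i x ∂(μ : Measure X) - ∫ x, φ i x ∂(ν : Measure X)|) :
    IsEmpiricalW1Bound X N (ε + s.card * D / √N) := by
  intro P ν hν
  have deviation_integrable (i) (hi : i ∈ s) : Integrable (fun y : Fin N → X =>
      |∫ x, φ i x ∂(emp N y : Measure X) - ∫ x, φ i x ∂(ν : Measure X)|)
      (Measure.pi fun i => (P i : Measure X)) :=
    integrable_of_continuous <| (((ProbabilityMeasure.continuous_integral_continuousMap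
      (⟨φ i, hφ i hi⟩ : C(X, ℝ))).comp (continuous_emp N)).sub continuous_const).abs
  calc ∫ y, W1 (emp N y) ν ∂(Measure.pi fun i => (P i : Measure X))
    _ ≤ ∫ y, (ε + ∑ i ∈ s, |∫ x, φ i x ∂(emp N y : Measure X) - ∫ x, φ i x ∂(ν : Measure X)|)
        ∂(Measure.pi fun i => (P i : Measure X)) :=
      integral_mono_of_nonneg (ae_of_all _ fun y => W1_nonneg _ _)
        ((integrable_const ε).add (integrable_finsetSum s deviation_integrable))
        (ae_of_all _ fun y => hW1 _ _)
    _ = ε + ∑ i ∈ s, ∫ y, |∫ x, φ i x ∂(emp N y : Measure X) - ∫ x, φ i x ∂(ν : Measure X)|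
        ∂(Measure.pi fun i => (P i : Measure X)) := by
      rw [integral_add (integrable_const ε) (integrable_finsetSum s deviation_integrable),
        integral_finsetSum s deviation_integrable]
      simp
    _ ≤ ε + ∑ _i ∈ s, D / √N := by
      gcongr with i hi
      exact integral_abs_integral_emp_sub_integral_le hN hν (hφ i hi) (hD i hi)
    _ = ε + s.card * D / √N := by simp [mul_div_assoc]

lemma eventually_isEmpiricalW1Bound [Nonempty X] {ε : ℝ} (hε : 0 < ε) :
    ∀ᶠ N in atTop, IsEmpiricalW1Bound X N ε := by
  obtain ⟨s, hs, hW1⟩ := exists_finset_forall_W1_le (X := X) (half_pos hε)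
  have oscillation (g) (hg : g ∈ s) (x y : X) : |g x - g y| ≤ Metric.diam (Set.univ : Set X) :=
    ((hs g hg).dist_le_mul x y).trans <| by
      simpa using Metric.dist_le_diam_of_mem isCompact_univ.isBounded trivial trivial
  have bound_tendsto : Tendsto (fun N : ℕ => ε / 2 + s.card * Metric.diam (Set.univ : Set X) / √N)
      atTop (𝓝 (ε / 2)) := by
    simpa using tendsto_const_nhds.add (tendsto_const_nhds.div_atTop
      (Real.tendsto_sqrt_atTop.comp tendsto_natCast_atTop_atTop))
  filter_upwards [bound_tendsto.eventually_le_const (half_lt_self hε), eventually_ne_atTop 0]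
    with N hle hN P ν hν
  exact (isEmpiricalW1Bound_of_W1_le_sum hN (fun g hg => (hs g hg).continuous) oscillation hW1
    P ν hν).trans hle

lemma W1_le_sum_abs_measureReal_singleton_sub {X : Type*} [PseudoMetricSpace X] [Fintype X]
    [MeasurableSpace X] [MeasurableSingletonClass X] (μ ν : ProbabilityMeasure X) :
    W1 μ ν ≤ ∑ a, Metric.diam (Set.univ : Set X) *
      |(μ : Measure X).real {a} - (ν : Measure X).real {a}| := by
  obtain ⟨b⟩ : Nonempty X := μ.nonempty
  refine W1_le fun f hf => ?_
  have integral_centered (κ : ProbabilityMeasure X) : ∫ x, f x ∂(κ : Measure X)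
      = f b + ∑ a, (κ : Measure X).real {a} * (f a - f b) := by
    have := integral_sub (μ := (κ : Measure X)) (f := f) .of_finite (integrable_const (f b))
    rw [integral_fintype .of_finite] at this
    simp only [smul_eq_mul, integral_const, probReal_univ, one_mul] at this
    linarith
  rw [integral_centered μ, integral_centered ν, add_sub_add_left_eq_sub, ← Finset.sum_sub_distrib]
  refine (Finset.abs_sum_le_sum_abs _ _).trans (Finset.sum_le_sum fun a _ => ?_)
  rw [← sub_mul, abs_mul, mul_comm]
  gcongr
  refine (hf.dist_le_mul a b).trans ?_
  simpa using Metric.dist_le_diam_of_mem isCompact_univ.isBounded trivial trivial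

lemma exists_isEmpiricalW1Bound_div_sqrt {X : Type*} [PseudoMetricSpace X] [T0Space X]
    [Finite X] [Nonempty X] [MeasurableSpace X] [OpensMeasurableSpace X] :
    ∃ C : ℝ, ∀ N ≠ 0, IsEmpiricalW1Bound X N (C / √N) := by
  have := Fintype.ofFinite X
  let D := Metric.diam (Set.univ : Set X)
  have hD : 0 ≤ D := Metric.diam_nonneg
  let φ (a : X) : X → ℝ := Set.indicator {a} fun _ => D
  have integral_φ (a : X) (κ : ProbabilityMeasure X) :
      ∫ x, φ a x ∂(κ : Measure X) = (κ : Measure X).real {a} * D :=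
    integral_indicator_const D (measurableSet_singleton a)
  refine ⟨Fintype.card X * D, fun N hN => ?_⟩
  rw [← zero_add (_ / _)]
  refine isEmpiricalW1Bound_of_W1_le_sum hN (s := Finset.univ) (φ := φ)
    (fun _ _ => continuous_of_discreteTopology) (fun a _ x y => ?_) fun μ ν => ?_
  · have mem_Icc (x : X) : φ a x ∈ Set.Icc 0 D :=
      ⟨Set.indicator_nonneg (fun _ _ => hD) x, Set.indicator_le_self' (fun _ _ => hD) x⟩
    simpa using abs_sub_le_of_le_of_le (mem_Icc x).1 (mem_Icc x).2 (mem_Icc y).1 (mem_Icc y).2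
  · simp_rw [integral_φ, ← sub_mul, abs_mul, abs_of_nonneg hD, mul_comm _ D, zero_add]
    exact W1_le_sum_abs_measureReal_singleton_sub μ ν

end EmpiricalMeasure

section AppendAction

variable {Y Z V : Type*} [MeasurableSpace Y] [MeasurableSpace Z] [MeasurableSpace V]

/-- Law of `(y, v, z)` when `(y, z)` has law `ρ` and the action `v` is sampled from `κ (y, z)`. -/
noncomputable def appendAction (ρ : Measure (Y × Z)) (κ : Y × Z → ProbabilityMeasure V) :
    Measure (Y × V × Z) :=
  ρ.bind fun y => (κ y : Measure V).map fun v => (y.1, v, y.2)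

lemma measurable_map_action {κ : Y × Z → ProbabilityMeasure V}
    (hκ : Measurable fun y => (κ y : Measure V)) :
    Measurable fun y => (κ y : Measure V).map fun v => (y.1, v, y.2) :=
  measurable_map_of_measurable_uncurry hκ (g := fun y v => (y.1, v, y.2)) (by fun_prop)

instance isProbabilityMeasure_map_action (κ : Y × Z → ProbabilityMeasure V) (y : Y × Z) :
    IsProbabilityMeasure ((κ y : Measure V).map fun v => (y.1, v, y.2)) :=
  Measure.isProbabilityMeasure_map (by fun_prop)

lemma isProbabilityMeasure_appendAction {ρ : Measure (Y × Z)} [IsProbabilityMeasure ρ]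
    {κ : Y × Z → ProbabilityMeasure V} (hκ : Measurable fun y => (κ y : Measure V)) :
    IsProbabilityMeasure (appendAction ρ κ) :=
  isProbabilityMeasure_bind (measurable_map_action hκ).aemeasurable
    (ae_of_all _ fun _ => inferInstance)

lemma measurable_appendAction {κ : Y × Z → ProbabilityMeasure V}
    (hκ : Measurable fun y => (κ y : Measure V)) :
    Measurable fun ρ : Measure (Y × Z) => appendAction ρ κ :=
  Measure.measurable_bind' (measurable_map_action hκ)

lemma isProbabilityMeasure_bind_appendAction {E : Type*} [MeasurableSpace E] {μ : Measure E}
    [IsProbabilityMeasure μ] {ρ : E → Measure (Y × Z)} [∀ s, IsProbabilityMeasure (ρ s)]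
    (hρ : Measurable ρ) {κ : Y × Z → ProbabilityMeasure V}
    (hκ : Measurable fun y => (κ y : Measure V)) :
    IsProbabilityMeasure (μ.bind fun s => appendAction (ρ s) κ) :=
  isProbabilityMeasure_bind ((measurable_appendAction hκ).comp hρ).aemeasurable
    (ae_of_all _ fun _ => isProbabilityMeasure_appendAction hκ)

variable [TopologicalSpace Y] [CompactSpace Y] [TopologicalSpace Z] [CompactSpace Z]
  [TopologicalSpace V] [CompactSpace V] [OpensMeasurableSpace (Y × V × Z)]

lemma integral_appendAction {ρ : Measure (Y × Z)} [IsProbabilityMeasure ρ]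
    {κ : Y × Z → ProbabilityMeasure V} (hκ : Measurable fun y => (κ y : Measure V))
    {F : Y × V × Z → ℝ} (hF : Continuous F) :
    ∫ s, F s ∂(appendAction ρ κ) = ∫ y, ∫ v, F (y.1, v, y.2) ∂(κ y : Measure V) ∂ρ := by
  rw [appendAction, integral_bind_of_continuous (measurable_map_action hκ) hF]
  congr 1 with y
  exact integral_map (by fun_prop) (integrable_of_continuous hF).aestronglyMeasurable

lemma integral_bind_appendAction {E : Type*} [MeasurableSpace E] {μ : Measure E}
    [IsProbabilityMeasure μ] {ρ : E → Measure (Y × Z)} [∀ s, IsProbabilityMeasure (ρ s)]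
    (hρ : Measurable ρ) {κ : Y × Z → ProbabilityMeasure V}
    (hκ : Measurable fun y => (κ y : Measure V)) {F : Y × V × Z → ℝ} (hF : Continuous F) :
    ∫ s, F s ∂(μ.bind fun s => appendAction (ρ s) κ)
      = ∫ s, ∫ y, ∫ v, F (y.1, v, y.2) ∂(κ y : Measure V) ∂(ρ s) ∂μ := by
  have (s : E) : IsProbabilityMeasure (appendAction (ρ s) κ) :=
    isProbabilityMeasure_appendAction hκ
  have measurable_law : Measurable fun s => appendAction (ρ s) κ :=
    (measurable_appendAction hκ).comp hρ
  rw [integral_bind_of_continuous measurable_law hF]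
  simp_rw [integral_appendAction hκ hF]

end AppendAction

section Averages

lemma lipschitzWith_integral_action {Y Z V : Type*} [PseudoMetricSpace Y] [PseudoMetricSpace Z]
    [PseudoMetricSpace V] [CompactSpace V] [MeasurableSpace V] [OpensMeasurableSpace V]
    {κ : Y × Z → ProbabilityMeasure V} {K L : ℝ≥0} (hκ : LipschitzWith K κ) {f : Y × V × Z → ℝ}
    (hf : LipschitzWith L f) :
    LipschitzWith (L * (1 + K)) fun y => ∫ v, f (y.1, v, y.2) ∂(κ y : Measure V) := by
  have reorder : LipschitzWith 1 fun z : (Y × Z) × V => (z.1.1, z.2, z.1.2) :=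
    LipschitzWith.of_dist_le_mul fun z z' => by
      simp only [Prod.dist_eq, NNReal.coe_one, one_mul]
      exact (max_left_comm _ _ _).trans_le (max_comm _ _).le
  simpa using lipschitzWith_integral_kernel hκ (hf.comp reorder)

lemma lipschitzWith_integral_transition {E Y Z : Type*} [PseudoMetricSpace E]
    [PseudoMetricSpace Y] [CompactSpace Y] [MeasurableSpace Y] [OpensMeasurableSpace Y]
    [PseudoMetricSpace Z] {κ : E → ProbabilityMeasure Y} {T : E → Z} {K KT L : ℝ≥0}
    (hκ : LipschitzWith K κ) (hT : LipschitzWith KT T) {g : Y × Z → ℝ} (hg : LipschitzWith L g) :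
    LipschitzWith (L * max 1 KT * (1 + K)) fun s => ∫ y, g (y, T s) ∂(κ s : Measure Y) := by
  have inner : LipschitzWith (max 1 KT) fun z : E × Y => (z.2, T z.1) := by
    simpa [comp_def] using LipschitzWith.prod_snd.prodMk (hT.comp LipschitzWith.prod_fst)
  exact lipschitzWith_integral_kernel hκ (hg.comp inner)

variable {X : Type*} [PseudoMetricSpace X] [CompactSpace X] [MeasurableSpace X]
  [OpensMeasurableSpace X] [Nonempty X] {N : ℕ} {e : ℝ} {P : Fin N → ProbabilityMeasure X}
  {ν : ProbabilityMeasure X} {L : ℝ≥0}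

lemma emp_bind {X : Type*} [MeasurableSpace X] [Nonempty X] (hN : N ≠ 0) (x : Fin N → X)
    {Z : Type*} [MeasurableSpace Z] {κ : X → Measure Z} (hκ : Measurable κ) :
    (emp N x : Measure X).bind κ = (N : ℝ≥0∞)⁻¹ • ∑ i, κ (x i) := by
  rw [emp_toMeasure hN, Measure.bind_smul, ← Measure.sum_fintype,
    Measure.bind_sum _ _ hκ.aemeasurable, Measure.sum_fintype]
  simp_rw [Measure.dirac_bind hκ]

lemma abs_integral_emp_sub_le (he : IsEmpiricalW1Bound X N e)
    (hν : (ν : Measure X) = (N : ℝ≥0∞)⁻¹ • ∑ i, (P i : Measure X)) {g : ProbabilityMeasure X → ℝ}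
    (hg : LipschitzWith L g) :
    |∫ x, g (emp N x) ∂(Measure.pi fun i => (P i : Measure X)) - g ν| ≤ L * e := by
  have integrable_g : Integrable (fun x => g (emp N x)) (Measure.pi fun i => (P i : Measure X)) :=
    integrable_of_continuous (hg.continuous.comp (continuous_emp N))
  have integrable_W1 : Integrable (fun x => W1 (emp N x) ν)
      (Measure.pi fun i => (P i : Measure X)) :=
    integrable_of_continuous (f := fun x => dist (emp N x) ν)
      ((continuous_emp N).dist continuous_const)
  calc |∫ x, g (emp N x) ∂(Measure.pi fun i => (P i : Measure X)) - g ν|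
    _ = |∫ x, (g (emp N x) - g ν) ∂(Measure.pi fun i => (P i : Measure X))| := by
      rw [integral_sub integrable_g (integrable_const _)]
      simp
    _ ≤ ∫ x, L * W1 (emp N x) ν ∂(Measure.pi fun i => (P i : Measure X)) :=
      (abs_integral_le_integral_abs).trans <| integral_mono (integrable_g.sub
        (integrable_const _)).abs (integrable_W1.const_mul _) fun x => hg.dist_le_mul _ _
    _ ≤ L * e := by
      rw [integral_const_mul]
      exact mul_le_mul_of_nonneg_left (he P ν hν) L.coe_nonneg

lemma abs_integral_prod_emp_sub_le {Y : Type*} [PseudoMetricSpace Y] [CompactSpace Y]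
    [MeasurableSpace Y] [OpensMeasurableSpace Y] (μ : ProbabilityMeasure Y)
    (he : IsEmpiricalW1Bound X N e)
    (hν : (ν : Measure X) = (N : ℝ≥0∞)⁻¹ • ∑ i, (P i : Measure X))
    {g : Y × ProbabilityMeasure X → ℝ} (hg : LipschitzWith L g) :
    |∫ z, g (z.1, emp N z.2) ∂((μ : Measure Y).prod (Measure.pi fun i => (P i : Measure X)))
      - ∫ y, g (y, ν) ∂(μ : Measure Y)| ≤ L * e := by
  have integrable_g : Integrable (fun z : Y × (Fin N → X) => g (z.1, emp N z.2))
      ((μ : Measure Y).prod (Measure.pi fun i => (P i : Measure X))) :=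
    integrable_of_continuous (hg.continuous.comp (continuous_prodMk_emp N))
  rw [integral_prod _ integrable_g]
  refine abs_integral_sub_integral_le integrable_g.integral_prod_left
    (integrable_of_continuous (hg.continuous.comp (Continuous.prodMk_left ν))) fun y => ?_
  simpa [comp_def] using abs_integral_emp_sub_le he hν (hg.comp (LipschitzWith.prodMk_left y))

end Averages

section MeanFieldLaws

variable {X U X0 U0 : Type*} [MeasurableSpace X] [MeasurableSpace U]

/-- `T` is the mean field transition obtained by closing the loop with the policy `π`:
`T t x⁰ u⁰ μ` is the law of the next state of an agent whose state has law `μ`. -/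
def IsClosedLoopMeanField (p : X → U → X0 → U0 → ProbabilityMeasure X → ProbabilityMeasure X)
    (π : ℕ → X → X0 → ProbabilityMeasure X → ProbabilityMeasure U)
    (T : ℕ → X0 → U0 → ProbabilityMeasure X → ProbabilityMeasure X) : Prop :=
  ∀ t x0 u0 μ, (T t x0 u0 μ : Measure X) = (μ : Measure X).bind fun x =>
    (π t x x0 μ : Measure U).bind fun u => (p x u x0 u0 μ : Measure X)

/-- `A` is the transition kernel of a single agent at time `t`, its action averaged out. -/
def IsAgentKernel (p : X → U → X0 → U0 → ProbabilityMeasure X → ProbabilityMeasure X)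
    (π : ℕ → X → X0 → ProbabilityMeasure X → ProbabilityMeasure U) (t : ℕ)
    (A : (X0 × U0 × ProbabilityMeasure X) × X → ProbabilityMeasure X) : Prop :=
  ∀ s x, (A (s, x) : Measure X) = (π t x s.1 s.2.2 : Measure U).bind fun u =>
    (p x u s.1 s.2.1 s.2.2 : Measure X)

variable {p : X → U → X0 → U0 → ProbabilityMeasure X → ProbabilityMeasure X}
  {π : ℕ → X → X0 → ProbabilityMeasure X → ProbabilityMeasure U} {t : ℕ}
  {A : (X0 × U0 × ProbabilityMeasure X) × X → ProbabilityMeasure X}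
  {T : ℕ → X0 → U0 → ProbabilityMeasure X → ProbabilityMeasure X}

lemma IsAgentKernel.toMeasure_meanField (hA : IsAgentKernel p π t A)
    (hT : IsClosedLoopMeanField p π T) (s : X0 × U0 × ProbabilityMeasure X) :
    (T t s.1 s.2.1 s.2.2 : Measure X) =
      (s.2.2 : Measure X).bind fun x => (A (s, x) : Measure X) := by
  rw [hT]
  exact congrArg _ (funext fun x => (hA s x).symm)

lemma IsAgentKernel.toMeasure_meanField_emp [Nonempty X] (hA : IsAgentKernel p π t A)
    (hT : IsClosedLoopMeanField p π T) {x0 : X0} {u0 : U0} {N : ℕ} (hN : N ≠ 0) (x : Fin N → X)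
    (measurable_A : Measurable fun y => (A ((x0, u0, emp N x), y) : Measure X)) :
    (T t x0 u0 (emp N x) : Measure X) =
      (N : ℝ≥0∞)⁻¹ • ∑ i, (A ((x0, u0, emp N x), x i) : Measure X) :=
  (hA.toMeasure_meanField hT (x0, u0, emp N x)).trans (emp_bind hN x measurable_A)

variable [MeasurableSpace X0] [MeasurableSpace U0]

/-- Transition kernel of the `N`-agent system before the next major action is taken: given the
current state, the major agent and the minor agents, each with kernel `A`, move independently. -/
noncomputable def populationTransition [Nonempty X]
    (p0 : X0 → U0 → ProbabilityMeasure X → ProbabilityMeasure X0)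
    (A : (X0 × U0 × ProbabilityMeasure X) × X → ProbabilityMeasure X) (N : ℕ)
    (s : X0 × U0 × (Fin N → X)) : ProbabilityMeasure (X0 × (Fin N → X)) :=
  (p0 s.1 s.2.1 (emp N s.2.2)).prod
    (ProbabilityMeasure.pi fun i => A ((s.1, s.2.1, emp N s.2.2), s.2.2 i))

/-- Transition kernel of the limiting process before the next major action is taken. -/
noncomputable def limitTransition
    (p0 : X0 → U0 → ProbabilityMeasure X → ProbabilityMeasure X0)
    (T : ℕ → X0 → U0 → ProbabilityMeasure X → ProbabilityMeasure X) (t : ℕ)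
    (s : X0 × U0 × ProbabilityMeasure X) : ProbabilityMeasure (X0 × ProbabilityMeasure X) :=
  (p0 s.1 s.2.1 s.2.2).map
    (f := fun y0 => (y0, T t s.1 s.2.1 s.2.2)) measurable_prodMk_right.aemeasurable

variable {p0 : X0 → U0 → ProbabilityMeasure X → ProbabilityMeasure X0}
  {π0 : ℕ → X0 → ProbabilityMeasure X → ProbabilityMeasure U0} {μ0 : ProbabilityMeasure X}
  {x00 : X0}

lemma m3LawN_zero [Nonempty X] {N : ℕ}
    (hπ0 : Measurable fun y : X0 × (Fin N → X) => (π0 0 y.1 (emp N y.2) : Measure U0)) :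
    m3LawN p p0 π π0 μ0 x00 N 0 =
      appendAction ((Measure.dirac x00).prod (Measure.pi fun _ => (μ0 : Measure X)))
        fun y => π0 0 y.1 (emp N y.2) := by
  rw [m3LawN, appendAction, Measure.dirac_prod, ← Measure.bind_dirac_eq_map _ (by fun_prop),
    Measure.bind_bind (by fun_prop) (measurable_map_action hπ0).aemeasurable]
  simp_rw [Measure.dirac_bind (measurable_map_action hπ0)]

lemma m3LawN_succ [Nonempty X] (hA : IsAgentKernel p π t A) (N : ℕ) :
    m3LawN p p0 π π0 μ0 x00 N (t + 1) = (m3LawN p p0 π π0 μ0 x00 N t).bind fun s =>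
      appendAction (populationTransition p0 A N s : Measure (X0 × (Fin N → X)))
        fun y => π0 (t + 1) y.1 (emp N y.2) := by
  unfold IsAgentKernel at hA
  simp only [m3LawN, hA, appendAction, populationTransition,
    ProbabilityMeasure.toMeasure_prod, ProbabilityMeasure.toMeasure_pi]

lemma m3LimLaw_zero
    (hπ0 : Measurable fun y : X0 × ProbabilityMeasure X => (π0 0 y.1 y.2 : Measure U0)) :
    m3LimLaw p0 π0 T μ0 x00 0 = appendAction (Measure.dirac (x00, μ0)) fun y => π0 0 y.1 y.2 :=
  (Measure.dirac_bind (measurable_map_action hπ0) (x00, μ0)).symm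

lemma m3LimLaw_succ
    (hπ0 : Measurable fun y : X0 × ProbabilityMeasure X => (π0 (t + 1) y.1 y.2 : Measure U0)) :
    m3LimLaw p0 π0 T μ0 x00 (t + 1) =
      (m3LimLaw p0 π0 T μ0 x00 t).bind fun s =>
        appendAction (limitTransition p0 T t s : Measure (X0 × ProbabilityMeasure X))
          fun y => π0 (t + 1) y.1 y.2 := by
  rw [m3LimLaw]
  congr 1 with s : 1
  rw [appendAction, limitTransition, ProbabilityMeasure.toMeasure_map,
    ← Measure.bind_dirac_eq_map _ (by fun_prop),
    Measure.bind_bind (by fun_prop) (measurable_map_action hπ0).aemeasurable]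
  simp_rw [Measure.dirac_bind (measurable_map_action hπ0)]

end MeanFieldLaws

section Regularity

variable {X U X0 U0 : Type*}
  [PseudoMetricSpace X] [CompactSpace X] [MeasurableSpace X] [OpensMeasurableSpace X]
  [PseudoMetricSpace U] [CompactSpace U] [MeasurableSpace U] [OpensMeasurableSpace U]
  [PseudoMetricSpace X0] [CompactSpace X0] [MeasurableSpace X0] [OpensMeasurableSpace X0]
  [PseudoMetricSpace U0] [CompactSpace U0] [MeasurableSpace U0] [OpensMeasurableSpace U0]

/-- The transition kernels `p`, `p⁰` and the policies `π`, `π⁰` are all `K`-Lipschitz, uniformly in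
time. Arguments are grouped as `((major state, major action, mean field), state), action`, and
product spaces carry the sup metric. -/
structure IsLipschitzM3FC (K : ℝ≥0)
    (p : X → U → X0 → U0 → ProbabilityMeasure X → ProbabilityMeasure X)
    (p0 : X0 → U0 → ProbabilityMeasure X → ProbabilityMeasure X0)
    (π : ℕ → X → X0 → ProbabilityMeasure X → ProbabilityMeasure U)
    (π0 : ℕ → X0 → ProbabilityMeasure X → ProbabilityMeasure U0) : Prop where
  transition : LipschitzWith K fun z : ((X0 × U0 × ProbabilityMeasure X) × X) × U =>
    p z.1.2 z.2 z.1.1.1 z.1.1.2.1 z.1.1.2.2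
  majorTransition : LipschitzWith K fun s : X0 × U0 × ProbabilityMeasure X => p0 s.1 s.2.1 s.2.2
  policy : ∀ t, LipschitzWith K fun z : (X0 × U0 × ProbabilityMeasure X) × X =>
    π t z.2 z.1.1 z.1.2.2
  majorPolicy : ∀ t, LipschitzWith K fun y : X0 × ProbabilityMeasure X => π0 t y.1 y.2

variable {K : ℝ≥0} {p : X → U → X0 → U0 → ProbabilityMeasure X → ProbabilityMeasure X}
  {p0 : X0 → U0 → ProbabilityMeasure X → ProbabilityMeasure X0}
  {π : ℕ → X → X0 → ProbabilityMeasure X → ProbabilityMeasure U}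
  {π0 : ℕ → X0 → ProbabilityMeasure X → ProbabilityMeasure U0}
  {T : ℕ → X0 → U0 → ProbabilityMeasure X → ProbabilityMeasure X}

lemma IsLipschitzM3FC.exists_isAgentKernel [BorelSpace X] (h : IsLipschitzM3FC K p p0 π π0)
    (t : ℕ) : ∃ A, IsAgentKernel p π t A ∧ LipschitzWith (K * (1 + K)) A := by
  obtain ⟨A, lipschitz_A, hA⟩ := exists_lipschitzWith_eq_bind (h.policy t) h.transition
  exact ⟨A, fun s x => hA (s, x), lipschitz_A⟩

lemma IsLipschitzM3FC.lipschitzWith_meanField [BorelSpace X] (h : IsLipschitzM3FC K p p0 π π0)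
    (hT : IsClosedLoopMeanField p π T) (t : ℕ) :
    LipschitzWith (K * (1 + K) * (1 + 1))
      fun s : X0 × U0 × ProbabilityMeasure X => T t s.1 s.2.1 s.2.2 := by
  obtain ⟨A, hA, lipschitz_A⟩ := h.exists_isAgentKernel t
  have lipschitz_snd : LipschitzWith 1 fun s : X0 × U0 × ProbabilityMeasure X => s.2.2 := by
    simpa [comp_def] using LipschitzWith.prod_snd.comp LipschitzWith.prod_snd
  exact lipschitzWith_bind lipschitz_snd lipschitz_A (hA.toMeasure_meanField hT)

end Regularity

section LimitOperator

variable {X X0 U0 : Type*} [PseudoMetricSpace X] [CompactSpace X] [MeasurableSpace X]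
  [OpensMeasurableSpace X]
  [PseudoMetricSpace X0] [CompactSpace X0] [MeasurableSpace X0] [OpensMeasurableSpace X0]
  [PseudoMetricSpace U0] [CompactSpace U0] [MeasurableSpace U0] [OpensMeasurableSpace U0]

/-- One-step Markov operator of the limiting process from time `t` to `t + 1`, acting on test
functions. -/
noncomputable def limitOperator {X X0 U0 : Type*} [MeasurableSpace X] [MeasurableSpace X0]
    [MeasurableSpace U0] (p0 : X0 → U0 → ProbabilityMeasure X → ProbabilityMeasure X0)
    (π0 : ℕ → X0 → ProbabilityMeasure X → ProbabilityMeasure U0)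
    (T : ℕ → X0 → U0 → ProbabilityMeasure X → ProbabilityMeasure X) (t : ℕ)
    (f : X0 × U0 × ProbabilityMeasure X → ℝ) (s : X0 × U0 × ProbabilityMeasure X) : ℝ :=
  ∫ y0, ∫ u0, f (y0, u0, T t s.1 s.2.1 s.2.2) ∂(π0 (t + 1) y0 (T t s.1 s.2.1 s.2.2) : Measure U0)
    ∂(p0 s.1 s.2.1 s.2.2 : Measure X0)

lemma lipschitzWith_limitOperator {K KT L : ℝ≥0}
    {p0 : X0 → U0 → ProbabilityMeasure X → ProbabilityMeasure X0}
    {π0 : ℕ → X0 → ProbabilityMeasure X → ProbabilityMeasure U0}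
    {T : ℕ → X0 → U0 → ProbabilityMeasure X → ProbabilityMeasure X} {t : ℕ}
    (hp0 : LipschitzWith K fun s : X0 × U0 × ProbabilityMeasure X => p0 s.1 s.2.1 s.2.2)
    (hπ0 : LipschitzWith K fun y : X0 × ProbabilityMeasure X => π0 (t + 1) y.1 y.2)
    (hT : LipschitzWith KT fun s : X0 × U0 × ProbabilityMeasure X => T t s.1 s.2.1 s.2.2)
    {f : X0 × U0 × ProbabilityMeasure X → ℝ} (hf : LipschitzWith L f) :
    LipschitzWith (L * (1 + K) * max 1 KT * (1 + K)) (limitOperator p0 π0 T t f) :=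
  lipschitzWith_integral_transition hp0 hT (lipschitzWith_integral_action hπ0 hf)

end LimitOperator

section Propagation

variable {X U X0 U0 : Type*}
  [PseudoMetricSpace X] [CompactSpace X] [MeasurableSpace X] [BorelSpace X] [Nonempty X]
  [PseudoMetricSpace U] [CompactSpace U] [MeasurableSpace U] [OpensMeasurableSpace U]
  [PseudoMetricSpace X0] [CompactSpace X0] [MeasurableSpace X0] [BorelSpace X0]
  [PseudoMetricSpace U0] [CompactSpace U0] [MeasurableSpace U0] [BorelSpace U0]
  {K L : ℝ≥0} {p : X → U → X0 → U0 → ProbabilityMeasure X → ProbabilityMeasure X}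
  {p0 : X0 → U0 → ProbabilityMeasure X → ProbabilityMeasure X0}
  {π : ℕ → X → X0 → ProbabilityMeasure X → ProbabilityMeasure U}
  {π0 : ℕ → X0 → ProbabilityMeasure X → ProbabilityMeasure U0}
  {A : (X0 × U0 × ProbabilityMeasure X) × X → ProbabilityMeasure X}
  {T : ℕ → X0 → U0 → ProbabilityMeasure X → ProbabilityMeasure X}
  {μ0 : ProbabilityMeasure X} {x00 : X0} {t N : ℕ} {e : ℝ}
  {f : X0 × U0 × ProbabilityMeasure X → ℝ}

namespace IsLipschitzM3FC

lemma measurable_majorPolicy_emp (h : IsLipschitzM3FC K p p0 π π0) (t N : ℕ) :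
    Measurable fun y : X0 × (Fin N → X) => (π0 t y.1 (emp N y.2) : Measure U0) :=
  measurable_toMeasure_of_continuous
    ((h.majorPolicy t).continuous.comp (continuous_prodMk_emp N))

lemma continuous_populationTransition (h : IsLipschitzM3FC K p p0 π π0) (hA : Continuous A)
    (N : ℕ) : Continuous (populationTransition p0 A N) :=
  have empirical_state := continuous_prodMk_prodMk_emp (X := X) (Y := X0) (V := U0) N
  ProbabilityMeasure.continuous_prod.comp <|
    (h.majorTransition.continuous.comp empirical_state).prodMk <|
      ProbabilityMeasure.continuous_pi.comp <| continuous_pi fun _ =>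
        hA.comp (empirical_state.prodMk (by fun_prop))

lemma isProbabilityMeasure_m3LawN (h : IsLipschitzM3FC K p p0 π π0) (t : ℕ) :
    IsProbabilityMeasure (m3LawN p p0 π π0 μ0 x00 N t) := by
  induction t with
  | zero =>
    rw [m3LawN_zero (h.measurable_majorPolicy_emp 0 N)]
    exact isProbabilityMeasure_appendAction (h.measurable_majorPolicy_emp 0 N)
  | succ t ih =>
    obtain ⟨A, hA, lipschitz_A⟩ := h.exists_isAgentKernel t
    rw [m3LawN_succ hA]
    exact isProbabilityMeasure_bind_appendAction
      (measurable_toMeasure_of_continuous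
        (h.continuous_populationTransition lipschitz_A.continuous N))
      (h.measurable_majorPolicy_emp (t + 1) N)

lemma abs_integral_populationTransition_sub_limitOperator_le (h : IsLipschitzM3FC K p p0 π π0)
    (hA : IsAgentKernel p π t A) (continuous_A : Continuous A) (hT : IsClosedLoopMeanField p π T)
    (hN : N ≠ 0) (he : IsEmpiricalW1Bound X N e) (hf : LipschitzWith L f)
    (s : X0 × U0 × (Fin N → X)) :
    |∫ y, ∫ u0, f (y.1, u0, emp N y.2) ∂(π0 (t + 1) y.1 (emp N y.2) : Measure U0)
        ∂(populationTransition p0 A N s : Measure (X0 × (Fin N → X)))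
      - limitOperator p0 π0 T t f (s.1, s.2.1, emp N s.2.2)| ≤ L * (1 + K) * e := by
  have average_agentKernel := hA.toMeasure_meanField_emp hT (x0 := s.1) (u0 := s.2.1) hN s.2.2
    (measurable_toMeasure_of_continuous (continuous_A.comp (Continuous.prodMk_right _)))
  simpa [populationTransition, limitOperator] using abs_integral_prod_emp_sub_le
    (p0 s.1 s.2.1 (emp N s.2.2)) he average_agentKernel
    (lipschitzWith_integral_action (h.majorPolicy (t + 1)) hf)

lemma abs_integral_m3LawN_succ_sub_le (h : IsLipschitzM3FC K p p0 π π0)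
    (hT : IsClosedLoopMeanField p π T) (hN : N ≠ 0) (he : IsEmpiricalW1Bound X N e)
    (hf : LipschitzWith L f) :
    |∫ s, f (s.1, s.2.1, emp N s.2.2) ∂(m3LawN p p0 π π0 μ0 x00 N (t + 1))
      - ∫ s, limitOperator p0 π0 T t f (s.1, s.2.1, emp N s.2.2) ∂(m3LawN p p0 π π0 μ0 x00 N t)|
      ≤ L * (1 + K) * e := by
  obtain ⟨A, hA, lipschitz_A⟩ := h.exists_isAgentKernel t
  have continuous_step := h.continuous_populationTransition lipschitz_A.continuous N
  have continuous_average := (lipschitzWith_integral_action (h.majorPolicy (t + 1)) hf).continuous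
  have continuous_limit := (lipschitzWith_limitOperator h.majorTransition (h.majorPolicy (t + 1))
    (h.lipschitzWith_meanField hT t) hf).continuous
  have := h.isProbabilityMeasure_m3LawN (μ0 := μ0) (x00 := x00) (N := N) t
  rw [m3LawN_succ hA, integral_bind_appendAction
    (measurable_toMeasure_of_continuous continuous_step) (h.measurable_majorPolicy_emp (t + 1) N)
    (F := fun s => f (s.1, s.2.1, emp N s.2.2))
    (hf.continuous.comp (continuous_prodMk_prodMk_emp N))]
  refine abs_integral_sub_integral_le
    (integrable_of_continuous ((ProbabilityMeasure.continuous_integral_continuousMap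
      (⟨_, continuous_average.comp (continuous_prodMk_emp N)⟩ : C(X0 × (Fin N → X), ℝ))).comp
        continuous_step))
    (integrable_of_continuous (continuous_limit.comp (continuous_prodMk_prodMk_emp N)))
    (h.abs_integral_populationTransition_sub_limitOperator_le hA lipschitz_A.continuous hT hN he hf)

end IsLipschitzM3FC

end Propagation

section Limit

/-- The constant in front of `e` in the error bound at time `t` for `L`-Lipschitz test functions:
every step costs one sampling error and turns the test function into its `limitOperator` image. -/
def chaosConstant (K : ℝ≥0) : ℕ → ℝ≥0 → ℝ≥0
  | 0, L => L * (1 + K)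
  | t + 1, L => L * (1 + K) +
      chaosConstant K t (L * (1 + K) * max 1 (K * (1 + K) * (1 + 1)) * (1 + K))

variable {X U X0 U0 : Type*}
  [MetricSpace X] [CompactSpace X] [MeasurableSpace X] [BorelSpace X] [Nonempty X]
  [PseudoMetricSpace U] [CompactSpace U] [MeasurableSpace U] [OpensMeasurableSpace U]
  [PseudoMetricSpace X0] [CompactSpace X0] [MeasurableSpace X0] [BorelSpace X0]
  [PseudoMetricSpace U0] [CompactSpace U0] [MeasurableSpace U0] [BorelSpace U0]
  {K L : ℝ≥0} {p : X → U → X0 → U0 → ProbabilityMeasure X → ProbabilityMeasure X}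
  {p0 : X0 → U0 → ProbabilityMeasure X → ProbabilityMeasure X0}
  {π : ℕ → X → X0 → ProbabilityMeasure X → ProbabilityMeasure U}
  {π0 : ℕ → X0 → ProbabilityMeasure X → ProbabilityMeasure U0}
  {T : ℕ → X0 → U0 → ProbabilityMeasure X → ProbabilityMeasure X}
  {μ0 : ProbabilityMeasure X} {x00 : X0} {t N : ℕ} {e : ℝ}
  {f : X0 × U0 × ProbabilityMeasure X → ℝ}

namespace IsLipschitzM3FC

lemma measurable_majorPolicy (h : IsLipschitzM3FC K p p0 π π0) (t : ℕ) :
    Measurable fun y : X0 × ProbabilityMeasure X => (π0 t y.1 y.2 : Measure U0) :=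
  measurable_toMeasure_of_continuous (h.majorPolicy t).continuous

lemma measurable_limitTransition (h : IsLipschitzM3FC K p p0 π π0)
    (hT : IsClosedLoopMeanField p π T) (t : ℕ) :
    Measurable fun s => (limitTransition p0 T t s : Measure (X0 × ProbabilityMeasure X)) := by
  have measurable_T : Measurable fun s : X0 × U0 × ProbabilityMeasure X =>
      T t s.1 s.2.1 s.2.2 :=
    (measurable_toMeasure_of_continuous (h.lipschitzWith_meanField hT t).continuous).subtype_mk
  exact measurable_map_of_measurable_uncurry
    (measurable_toMeasure_of_continuous h.majorTransition.continuous)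
    (measurable_snd.prodMk (measurable_T.comp measurable_fst))

lemma isProbabilityMeasure_m3LimLaw (h : IsLipschitzM3FC K p p0 π π0)
    (hT : IsClosedLoopMeanField p π T) (t : ℕ) :
    IsProbabilityMeasure (m3LimLaw p0 π0 T μ0 x00 t) := by
  induction t with
  | zero =>
    rw [m3LimLaw_zero (h.measurable_majorPolicy 0)]
    exact isProbabilityMeasure_appendAction (h.measurable_majorPolicy 0)
  | succ t ih =>
    rw [m3LimLaw_succ (h.measurable_majorPolicy (t + 1))]
    exact isProbabilityMeasure_bind_appendAction (h.measurable_limitTransition hT t)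
      (h.measurable_majorPolicy (t + 1))

lemma integral_m3LimLaw_succ (h : IsLipschitzM3FC K p p0 π π0)
    (hT : IsClosedLoopMeanField p π T) (hf : LipschitzWith L f) :
    ∫ s, f s ∂(m3LimLaw p0 π0 T μ0 x00 (t + 1))
      = ∫ s, limitOperator p0 π0 T t f s ∂(m3LimLaw p0 π0 T μ0 x00 t) := by
  have := h.isProbabilityMeasure_m3LimLaw (μ0 := μ0) (x00 := x00) hT t
  have continuous_average := (lipschitzWith_integral_action (h.majorPolicy (t + 1)) hf).continuous
  rw [m3LimLaw_succ (h.measurable_majorPolicy (t + 1)), integral_bind_appendAction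
    (h.measurable_limitTransition hT t) (h.measurable_majorPolicy (t + 1)) hf.continuous]
  congr 1 with s
  rw [limitTransition, ProbabilityMeasure.toMeasure_map]
  exact integral_map (by fun_prop)
    (integrable_of_continuous continuous_average).aestronglyMeasurable

lemma abs_integral_m3LawN_zero_sub_le (h : IsLipschitzM3FC K p p0 π π0) (hN : N ≠ 0)
    (he : IsEmpiricalW1Bound X N e) (hf : LipschitzWith L f) :
    |∫ s, f (s.1, s.2.1, emp N s.2.2) ∂(m3LawN p p0 π π0 μ0 x00 N 0)
      - ∫ s, f s ∂(m3LimLaw p0 π0 T μ0 x00 0)| ≤ L * (1 + K) * e := by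
  have initial_average : (μ0 : Measure X) =
      (N : ℝ≥0∞)⁻¹ • ∑ _i : Fin N, (μ0 : Measure X) := by
    rw [Finset.sum_const, Finset.card_univ, Fintype.card_fin, ← Nat.cast_smul_eq_nsmul ℝ≥0∞,
      smul_smul, ENNReal.inv_mul_cancel (by simpa) (by simp), one_smul]
  have lipschitz_average := lipschitzWith_integral_action (h.majorPolicy 0) hf
  rw [m3LawN_zero (h.measurable_majorPolicy_emp 0 N), m3LimLaw_zero (h.measurable_majorPolicy 0),
    integral_appendAction (h.measurable_majorPolicy_emp 0 N)
      (F := fun s => f (s.1, s.2.1, emp N s.2.2))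
      (hf.continuous.comp (continuous_prodMk_prodMk_emp N)),
    integral_appendAction (h.measurable_majorPolicy 0) hf.continuous]
  have average_at_x00 : ∫ y, ∫ v, f (y, v, μ0) ∂(π0 0 y μ0 : Measure U0) ∂(Measure.dirac x00)
      = ∫ v, f (x00, v, μ0) ∂(π0 0 x00 μ0 : Measure U0) :=
    integral_dirac' _ x00
      (lipschitz_average.continuous.comp (Continuous.prodMk_left μ0)).stronglyMeasurable
  rw [integral_dirac' _ (x00, μ0) lipschitz_average.continuous.stronglyMeasurable]
  simpa [average_at_x00] using abs_integral_prod_emp_sub_le ⟨Measure.dirac x00, inferInstance⟩ he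
    initial_average lipschitz_average

theorem abs_integral_m3LawN_sub_integral_m3LimLaw_le (h : IsLipschitzM3FC K p p0 π π0)
    (hT : IsClosedLoopMeanField p π T) (hN : N ≠ 0) (he : IsEmpiricalW1Bound X N e) (t : ℕ)
    (hf : LipschitzWith L f) :
    |∫ s, f (s.1, s.2.1, emp N s.2.2) ∂(m3LawN p p0 π π0 μ0 x00 N t)
      - ∫ s, f s ∂(m3LimLaw p0 π0 T μ0 x00 t)| ≤ chaosConstant K t L * e := by
  induction t generalizing f L with
  | zero => simpa [chaosConstant] using h.abs_integral_m3LawN_zero_sub_le hN he hf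
  | succ t ih =>
    have lipschitz_limit := lipschitzWith_limitOperator h.majorTransition (h.majorPolicy (t + 1))
      (h.lipschitzWith_meanField hT t) hf
    rw [h.integral_m3LimLaw_succ hT hf]
    calc
      _ ≤ L * (1 + K) * e + chaosConstant K t
          (L * (1 + K) * max 1 (K * (1 + K) * (1 + 1)) * (1 + K)) * e :=
        (abs_sub_le _ _ _).trans
          (add_le_add (h.abs_integral_m3LawN_succ_sub_le hT hN he hf) (ih lipschitz_limit))
      _ = chaosConstant K (t + 1) L * e := by
        rw [chaosConstant]
        push_cast
        ring

end IsLipschitzM3FC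

end Limit

section LipschitzConversion

lemma lipschitzWith_of_dist_le_mul_of_le {E Z : Type*} [PseudoMetricSpace E] [PseudoMetricSpace Z]
    {g : E → Z} {d : E → E → ℝ} {C : ℝ} {K n : ℝ≥0} (hg : ∀ z z', dist (g z) (g z') ≤ C * d z z')
    (hC : C ≤ K) (hd : ∀ z z', 0 ≤ d z z' ∧ d z z' ≤ n * dist z z') : LipschitzWith (K * n) g :=
  LipschitzWith.of_dist_le_mul fun z z' => calc
    _ ≤ C * d z z' := hg z z'
    _ ≤ K * d z z' := mul_le_mul_of_nonneg_right hC (hd z z').1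
    _ ≤ K * (n * dist z z') := mul_le_mul_of_nonneg_left (hd z z').2 K.coe_nonneg
    _ = ↑(K * n) * dist z z' := by push_cast; ring

lemma lipschitzWith_of_abs_sub_le {X X0 U0 : Type*} [PseudoMetricSpace X] [CompactSpace X]
    [MeasurableSpace X] [OpensMeasurableSpace X] [PseudoMetricSpace X0] [PseudoMetricSpace U0]
    {f : X0 × U0 × ProbabilityMeasure X → ℝ} {L : ℝ}
    (hf : ∀ a b, |f a - f b| ≤ L * (dist a.1 b.1 + dist a.2.1 b.2.1 + dist a.2.2 b.2.2)) :
    LipschitzWith (L.toNNReal * 3) f :=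
  lipschitzWith_of_dist_le_mul_of_le hf (Real.le_coe_toNNReal L) fun _ _ =>
    ⟨by positivity, by
      simp only [Prod.dist_eq, NNReal.coe_ofNat]
      grind⟩

variable {X U X0 U0 : Type*}
  [PseudoMetricSpace X] [CompactSpace X] [MeasurableSpace X] [OpensMeasurableSpace X]
  [PseudoMetricSpace U] [CompactSpace U] [MeasurableSpace U] [OpensMeasurableSpace U]
  [PseudoMetricSpace X0] [CompactSpace X0] [MeasurableSpace X0] [OpensMeasurableSpace X0]
  [PseudoMetricSpace U0] [CompactSpace U0] [MeasurableSpace U0] [OpensMeasurableSpace U0]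

-- Each right-hand side sums at most five distances, and each of these is at most the sup distance.
lemma IsLipschitzM3FC.of_abs_integral_sub_le
    {p : X → U → X0 → U0 → ProbabilityMeasure X → ProbabilityMeasure X}
    {p0 : X0 → U0 → ProbabilityMeasure X → ProbabilityMeasure X0}
    {π : ℕ → X → X0 → ProbabilityMeasure X → ProbabilityMeasure U}
    {π0 : ℕ → X0 → ProbabilityMeasure X → ProbabilityMeasure U0} {Lp Lp0 LPi : ℝ}
    (hp : ∀ x x' u u' x0 x0' u0 u0' μ μ' (f : X → ℝ), LipschitzWith 1 f →
      |∫ y, f y ∂(p x u x0 u0 μ : Measure X) - ∫ y, f y ∂(p x' u' x0' u0' μ' : Measure X)|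
        ≤ Lp * (dist x x' + dist u u' + dist x0 x0' + dist u0 u0' + dist μ μ'))
    (hp0 : ∀ x0 x0' u0 u0' μ μ' (f : X0 → ℝ), LipschitzWith 1 f →
      |∫ y, f y ∂(p0 x0 u0 μ : Measure X0) - ∫ y, f y ∂(p0 x0' u0' μ' : Measure X0)|
        ≤ Lp0 * (dist x0 x0' + dist u0 u0' + dist μ μ'))
    (hπ : ∀ t x x' x0 x0' μ μ' (g : U → ℝ), LipschitzWith 1 g →
      |∫ u, g u ∂(π t x x0 μ : Measure U) - ∫ u, g u ∂(π t x' x0' μ' : Measure U)|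
        ≤ LPi * (dist x x' + dist x0 x0' + dist μ μ'))
    (hπ0 : ∀ t x0 x0' μ μ' (g : U0 → ℝ), LipschitzWith 1 g →
      |∫ u, g u ∂(π0 t x0 μ : Measure U0) - ∫ u, g u ∂(π0 t x0' μ' : Measure U0)|
        ≤ LPi * (dist x0 x0' + dist μ μ')) :
    IsLipschitzM3FC ((max Lp (max Lp0 LPi)).toNNReal * 5) p p0 π π0 where
  transition := lipschitzWith_of_dist_le_mul_of_le
    (fun _ _ => W1_le (hp _ _ _ _ _ _ _ _ _ _)) (by simp)
    fun _ _ => ⟨by positivity, by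
      simp only [Prod.dist_eq, NNReal.coe_ofNat]
      grind⟩
  majorTransition := lipschitzWith_of_dist_le_mul_of_le
    (fun _ _ => W1_le (hp0 _ _ _ _ _ _)) (by simp)
    fun z z' => ⟨by positivity, by
      simp only [Prod.dist_eq, NNReal.coe_ofNat]
      grind [dist_nonneg (x := z.1) (y := z'.1)]⟩
  policy t := lipschitzWith_of_dist_le_mul_of_le
    (fun _ _ => W1_le (hπ t _ _ _ _ _ _)) (by simp)
    fun z z' => ⟨by positivity, by
      simp only [Prod.dist_eq, NNReal.coe_ofNat]
      grind [dist_nonneg (x := z.2) (y := z'.2)]⟩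
  majorPolicy t := lipschitzWith_of_dist_le_mul_of_le
    (fun _ _ => W1_le (hπ0 t _ _ _ _)) (by simp)
    fun z z' => ⟨by positivity, by
      simp only [Prod.dist_eq, NNReal.coe_ofNat]
      grind [dist_nonneg (x := z.1) (y := z'.1)]⟩

end LipschitzConversion

end Wasserstein

/-- propagation of chaos for M3FC, with rate `O(1/√N)` for finite `𝒳`. For any
equi-Lipschitz family `ℱ` on `𝒳⁰ × 𝒰⁰ × 𝒫(𝒳)` and every time `t`,
`sup_{f,π,π⁰} |E[f(x⁰_t,u⁰_t,μ^N_t)] − E[f(x⁰_t,u⁰_t,μ_t)]| → 0` as `N → ∞`; if `𝒳` is finite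
the convergence is at rate `O(1/√N)`. -/
theorem statement14 {X U X0 U0 : Type*}
    [MetricSpace X] [CompactSpace X] [MeasurableSpace X] [BorelSpace X] [Nonempty X]
    [MetricSpace U] [CompactSpace U] [MeasurableSpace U] [BorelSpace U]
    [MetricSpace X0] [CompactSpace X0] [MeasurableSpace X0] [BorelSpace X0]
    [MetricSpace U0] [CompactSpace U0] [MeasurableSpace U0] [BorelSpace U0]
    (Lp Lp0 Lr LPi LF : ℝ)
    (p : X → U → X0 → U0 → ProbabilityMeasure X → ProbabilityMeasure X)
    (hp : ∀ (x x' : X) (u u' : U) (x0 x0' : X0) (u0 u0' : U0)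
        (μ μ' : ProbabilityMeasure X) (f : X → ℝ), LipschitzWith 1 f →
      |∫ y, f y ∂(p x u x0 u0 μ : Measure X) - ∫ y, f y ∂(p x' u' x0' u0' μ' : Measure X)|
        ≤ Lp * (dist x x' + dist u u' + dist x0 x0' + dist u0 u0' + W1 μ μ'))
    (p0 : X0 → U0 → ProbabilityMeasure X → ProbabilityMeasure X0)
    (hp0 : ∀ (x0 x0' : X0) (u0 u0' : U0) (μ μ' : ProbabilityMeasure X) (f : X0 → ℝ),
        LipschitzWith 1 f →
      |∫ y, f y ∂(p0 x0 u0 μ : Measure X0) - ∫ y, f y ∂(p0 x0' u0' μ' : Measure X0)|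
        ≤ Lp0 * (dist x0 x0' + dist u0 u0' + W1 μ μ'))
    (r : X0 → U0 → ProbabilityMeasure X → ℝ)
    (hr : ∀ (x0 x0' : X0) (u0 u0' : U0) (μ μ' : ProbabilityMeasure X),
      |r x0 u0 μ - r x0' u0' μ'| ≤ Lr * (dist x0 x0' + dist u0 u0' + W1 μ μ'))
    (Pi : Set (ℕ → X → X0 → ProbabilityMeasure X → ProbabilityMeasure U))
    (hPi : ∀ π ∈ Pi, ∀ (t : ℕ) (x x' : X) (x0 x0' : X0) (μ μ' : ProbabilityMeasure X)
        (g : U → ℝ), LipschitzWith 1 g →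
      |∫ u, g u ∂(π t x x0 μ : Measure U) - ∫ u, g u ∂(π t x' x0' μ' : Measure U)|
        ≤ LPi * (dist x x' + dist x0 x0' + W1 μ μ'))
    (Pi0 : Set (ℕ → X0 → ProbabilityMeasure X → ProbabilityMeasure U0))
    (hPi0 : ∀ π0 ∈ Pi0, ∀ (t : ℕ) (x0 x0' : X0) (μ μ' : ProbabilityMeasure X) (g : U0 → ℝ),
        LipschitzWith 1 g →
      |∫ u, g u ∂(π0 t x0 μ : Measure U0) - ∫ u, g u ∂(π0 t x0' μ' : Measure U0)|
        ≤ LPi * (dist x0 x0' + W1 μ μ'))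
    (F : Set (X0 × U0 × ProbabilityMeasure X → ℝ))
    (hF : ∀ f ∈ F, ∀ a b : X0 × U0 × ProbabilityMeasure X,
      |f a - f b| ≤ LF * (dist a.1 b.1 + dist a.2.1 b.2.1 + W1 a.2.2 b.2.2))
    (μ0 : ProbabilityMeasure X) (x00 : X0)
    (Tcl : (ℕ → X → X0 → ProbabilityMeasure X → ProbabilityMeasure U) →
      ℕ → X0 → U0 → ProbabilityMeasure X → ProbabilityMeasure X)
    (hTcl : ∀ q ∈ Pi, ∀ (t : ℕ) (x0 : X0) (u0 : U0) (μ : ProbabilityMeasure X),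
      (Tcl q t x0 u0 μ : Measure X) = (μ : Measure X).bind fun x =>
        ((q t x x0 μ : Measure U)).bind fun u => (p x u x0 u0 μ : Measure X)) :
    (∀ t : ℕ, ∀ ε > (0 : ℝ), ∃ N0 : ℕ, ∀ N ≥ N0, ∀ q ∈ Pi, ∀ q0 ∈ Pi0, ∀ f ∈ F,
      |(∫ s, f (s.1, s.2.1, emp N s.2.2) ∂(m3LawN p p0 q q0 μ0 x00 N t))
        - ∫ s, f s ∂(m3LimLaw p0 q0 (Tcl q) μ0 x00 t)| ≤ ε) ∧
    (Finite X → ∀ t : ℕ, ∃ C : ℝ, ∀ N : ℕ, 1 ≤ N → ∀ q ∈ Pi, ∀ q0 ∈ Pi0, ∀ f ∈ F,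
      |(∫ s, f (s.1, s.2.1, emp N s.2.2) ∂(m3LawN p p0 q q0 μ0 x00 N t))
        - ∫ s, f s ∂(m3LimLaw p0 q0 (Tcl q) μ0 x00 t)| ≤ C / Real.sqrt N) := by
  let C (t : ℕ) := chaosConstant ((max Lp (max Lp0 LPi)).toNNReal * 5) t (LF.toNNReal * 3)
  have chaos_bound {q q0 f} (hq : q ∈ Pi) (hq0 : q0 ∈ Pi0) (hf : f ∈ F) (t : ℕ) {N : ℕ}
      (hN : N ≠ 0) {e : ℝ} (he : IsEmpiricalW1Bound X N e) :
      |∫ s, f (s.1, s.2.1, emp N s.2.2) ∂(m3LawN p p0 q q0 μ0 x00 N t)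
        - ∫ s, f s ∂(m3LimLaw p0 q0 (Tcl q) μ0 x00 t)| ≤ C t * e :=
    (IsLipschitzM3FC.of_abs_integral_sub_le hp hp0 (hPi q hq)
      (hPi0 q0 hq0)).abs_integral_m3LawN_sub_integral_m3LimLaw_le
        (hTcl q hq) hN he t (lipschitzWith_of_abs_sub_le (hF f hf))
  refine ⟨fun t ε hε => ?_, fun _ t => ?_⟩
  · obtain ⟨N0, hN0⟩ := eventually_atTop.1 <| (eventually_ne_atTop 0).and <|
      eventually_isEmpiricalW1Bound (X := X) (ε := ε / (C t + 1)) (by positivity)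
    refine ⟨N0, fun N hN q hq q0 hq0 f hf =>
      (chaos_bound hq hq0 hf t (hN0 N hN).1 (hN0 N hN).2).trans ?_⟩
    rw [mul_div_left_comm]
    exact mul_le_of_le_one_right hε.le (div_le_one_of_le₀ (by simp) (by positivity))
  · obtain ⟨c, hc⟩ := exists_isEmpiricalW1Bound_div_sqrt (X := X)
    refine ⟨C t * c, fun N hN q hq q0 hq0 f hf => ?_⟩
    have N_ne_zero := Nat.one_le_iff_ne_zero.1 hN
    rw [mul_div_assoc]
    exact chaos_bound hq hq0 hf t N_ne_zero (hc N N_ne_zero)
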